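/- Let C be ℝ or ℝ_{≥0}, let ψ : C → ℝ be strictly convex, twice differentiable on int(C), with x ↦ ψ'(x)x − ψ(x) coercive and ψ' odd when C = ℝ (ψ'(0) ≥ 0 when C = ℝ_{≥0}); let α > 0 and C_K ∈ (0,1). Suppose x ∈ C and z ∈ ∂h(x) satisfy |z| < C_K(ψ'(α) − ψ'(0)) + ψ'(0). Then for every x' ∈ C with x' ≠ x and every z' ∈ ∂h(x'), one has (z − z')(x − x') > (1 − C_K)(ψ'(x) − ψ'(x'))(x − x'). -/

import Mathlib

open Classical

noncomputable section

/-- `‖x‖₀`: the number of nonzero entries of a vector. -/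
def norm0 {ι : Type*} [Fintype ι] (x : ι → ℝ) : ℕ :=
  (Finset.univ.filter fun i => x i ≠ 0).card

/-- Euclidean inner product on `ι → ℝ`. -/
def dotp {ι : Type*} [Fintype ι] (x y : ι → ℝ) : ℝ := ∑ i, x i * y i

/-- squared Euclidean norm. -/
def sqnorm {ι : Type*} [Fintype ι] (x : ι → ℝ) : ℝ := ∑ i, (x i) ^ 2

/-- Euclidean norm. -/
def enorm2 {ι : Type*} [Fintype ι] (x : ι → ℝ) : ℝ := Real.sqrt (sqnorm x)

/-- the subdifferential `∂h` of `h = β_ψ + ψ` (Clarke subdifferential, closed form). -/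
def subdiffH (𝒞 : Set ℝ) (dψ : ℝ → ℝ) (α : ℝ) (t : ℝ) : Set ℝ :=
  if 𝒞 = Set.univ then
    if t = 0 then Set.Icc (-(dψ α)) (dψ α)
    else if |t| ≤ α then {Real.sign t * dψ α}
    else {dψ t}
  else
    if t ≤ α then {dψ α} else {dψ t}

theorem dmono_aux (S : Set ℝ) (ψ dψ : ℝ → ℝ) (hconv : StrictConvexOn ℝ S ψ)
    (hderiv : ∀ t ∈ S, HasDerivWithinAt ψ (dψ t) S t) (a b : ℝ) (ha : a ∈ S) (hb : b ∈ S)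
    (hab : a < b) : dψ a < dψ b :=
  (hconv.lt_slope_of_hasDerivWithinAt ha hb hab (hderiv a ha)).trans
    (hconv.slope_lt_of_hasDerivWithinAt ha hb hab (hderiv b hb))

/-- Lemma for small `|z|`. -/
theorem stmt7
    (𝒞 : Set ℝ) (h𝒞 : 𝒞 = Set.univ ∨ 𝒞 = Set.Ici 0)
    (ψ dψ : ℝ → ℝ) (α CK : ℝ) (hα : 0 < α) (hCK0 : 0 < CK) (hCK1 : CK < 1)
    -- `ψ` strictly convex with derivative `dψ` on `𝒞`, twice differentiable on `int 𝒞`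
    (hconv : StrictConvexOn ℝ 𝒞 ψ)
    (hderiv : ∀ t ∈ 𝒞, HasDerivWithinAt ψ (dψ t) 𝒞 t)
    (hderiv2 : ∀ t ∈ interior 𝒞, DifferentiableAt ℝ dψ t)
    -- coercivity of `t ↦ ψ'(t)t - ψ(t)`
    (hcoer : ∀ c : ℝ, ∃ R : ℝ, ∀ t ∈ 𝒞, R ≤ |t| → c ≤ dψ t * t - ψ t)
    -- `ψ'` odd when `𝒞 = ℝ`, `ψ'(0) ≥ 0` when `𝒞 = ℝ_{≥0}`
    (hodd : 𝒞 = Set.univ → ∀ t, dψ (-t) = -dψ t)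
    (hnn : 𝒞 = Set.Ici 0 → 0 ≤ dψ 0)
    (x z : ℝ) (hx : x ∈ 𝒞) (hz : z ∈ subdiffH 𝒞 dψ α x)
    (hzsmall : |z| < CK * (dψ α - dψ 0) + dψ 0) :
    ∀ x' ∈ 𝒞, x' ≠ x → ∀ z' ∈ subdiffH 𝒞 dψ α x',
      (1 - CK) * ((dψ x - dψ x') * (x - x')) < (z - z') * (x - x') := by
  have hmono := dmono_aux 𝒞 ψ dψ hconv hderiv
  intro x' hx' hne z' hz'
  rcases h𝒞 with h | h
  · have hodd' := hodd h
    have hm : ∀ a b : ℝ, a < b → dψ a < dψ b := fun a b hab =>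
      hmono a b (by simp [h]) (by simp [h]) hab
    have hm' : ∀ a b : ℝ, a ≤ b → dψ a ≤ dψ b := by
      intro a b hab
      rcases hab.eq_or_lt with e | e
      · rw [e]
      · exact (hm a b e).le
    have h0 : dψ 0 = 0 := by
      have := hodd' 0
      rw [neg_zero] at this
      linarith
    have hpos : 0 < dψ α := h0 ▸ hm 0 α hα
    rw [h0] at hzsmall
    have hCα : CK * dψ α < dψ α := by nlinarith
    have key : ∀ t w : ℝ, w ∈ subdiffH 𝒞 dψ α t →
        (0 < t → dψ α ≤ w ∧ dψ t ≤ w) ∧ (t < 0 → w ≤ -dψ α ∧ w ≤ dψ t) := by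
      intro t w hw
      simp only [subdiffH, h, if_true] at hw
      constructor
      · intro ht
        rw [if_neg ht.ne'] at hw
        split_ifs at hw with hc
        · rw [Real.sign_of_pos ht, one_mul, Set.mem_singleton_iff] at hw
          rw [abs_of_pos ht] at hc
          subst hw
          exact ⟨le_rfl, hm' _ _ hc⟩
        · rw [abs_of_pos ht] at hc
          rw [Set.mem_singleton_iff] at hw
          subst hw
          exact ⟨hm' _ _ (by linarith), le_rfl⟩
      · intro ht
        rw [if_neg ht.ne] at hw
        split_ifs at hw with hc
        · rw [Real.sign_of_neg ht, neg_one_mul, Set.mem_singleton_iff] at hw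
          rw [abs_of_neg ht] at hc
          subst hw
          have := hm' _ _ hc
          rw [hodd'] at this
          exact ⟨le_rfl, by linarith⟩
        · rw [abs_of_neg ht] at hc
          rw [Set.mem_singleton_iff] at hw
          subst hw
          have := hm' α (-t) (by linarith)
          rw [hodd'] at this
          exact ⟨by linarith, le_rfl⟩
    obtain ⟨hz1, hz2⟩ := abs_lt.mp hzsmall
    have hx0 : x = 0 := by
      rcases lt_trichotomy x 0 with hlt | he | hgt
      · have := ((key x z hz).2 hlt).1
        linarith
      · exact he
      · have := ((key x z hz).1 hgt).1
        linarith
    subst hx0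
    rw [h0]
    rcases lt_or_gt_of_ne hne with hlt | hgt
    · obtain ⟨k1, k2⟩ := (key x' z' hz').2 hlt
      have e1 : (1 - CK) * (0 - dψ x') < z - z' := by nlinarith
      have := mul_lt_mul_of_pos_right e1 (show 0 < 0 - x' by linarith)
      linarith
    · obtain ⟨k1, k2⟩ := (key x' z' hz').1 hgt
      have e1 : z - z' < (1 - CK) * (0 - dψ x') := by nlinarith
      have := mul_lt_mul_of_neg_right e1 (show 0 - x' < 0 by linarith)
      linarith
  · exfalso
    have hne' : 𝒞 ≠ Set.univ := by
      intro hu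
      have : (-1 : ℝ) ∈ Set.Ici (0 : ℝ) := by rw [← h, hu]; trivial
      norm_num at this
    have h0α : dψ 0 < dψ α := hmono 0 α (by simp [h]) (by simp [h, hα.le]) hα
    have hzα : dψ α ≤ z := by
      simp only [subdiffH, if_neg hne'] at hz
      split_ifs at hz with hc
      · rw [Set.mem_singleton_iff] at hz
        exact hz.ge
      · rw [Set.mem_singleton_iff] at hz
        rw [hz]
        exact (hmono α x (by simp [h, hα.le]) hx (by linarith)).le
    have := le_abs_self z
    nlinarith
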